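/- An element (λ, s) with λ = (λ₁ ≥ λ₂ ≥ λ₃ ≥ λ₄) ∈ ℝ⁴ and s = (s₁ ≥ s₂ ≥ 0) ∈ ℝ² belongs to A(2,2) if and only if the following four inequalities hold: λ₁ − λ₄ ≥ 2s₁, λ₂ − λ₄ ≥ 2s₂, λ₁ − λ₃ ≥ 2s₂, and λ₁ + λ₂ − λ₃ − λ₄ ≥ 2(s₁ + s₂). -/

import Mathlib

open Matrix

/-- Eigenvalues of a (Hermitian) complex matrix, listed in decreasing order. -/
noncomputable def eigVec {k : ℕ} (X : Matrix (Fin k) (Fin k) ℂ) (hX : X.IsHermitian) :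
    Fin k → ℝ :=
  fun i => hX.eigenvalues (Tuple.sort hX.eigenvalues i.rev)

/-- The `i`-th (0-based) singular value of a rectangular complex matrix:
the square root of the `i`-th largest eigenvalue of `Y * Yᴴ` (and `0` for `i ≥ a`). -/
noncomputable def sval {a b : ℕ} (Y : Matrix (Fin a) (Fin b) ℂ) (i : ℕ) : ℝ :=
  if h : i < a then
    Real.sqrt (eigVec (Y * Yᴴ) (Matrix.isHermitian_mul_conjTranspose_self Y) ⟨i, h⟩)
  else 0

/-- The Horn cone `Horn(k)`. -/
def Horn (k : ℕ) : Set ((Fin k → ℝ) × (Fin k → ℝ) × (Fin k → ℝ)) :=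
  { v | ∃ (X Y : Matrix (Fin k) (Fin k) ℂ) (hX : X.IsHermitian) (hY : Y.IsHermitian),
      v.1 = eigVec X hX ∧ v.2.1 = eigVec Y hY ∧ v.2.2 = eigVec (X + Y) (hX.add hY) }

/-- The Littlewood–Richardson cone `LR(m,n)`. -/
def LRcone (m n : ℕ) : Set ((Fin (m + n) → ℝ) × (Fin m → ℝ) × (Fin n → ℝ)) :=
  { v | ∃ (M : Matrix (Fin (m + n)) (Fin (m + n)) ℂ) (hM : M.IsHermitian),
      v.1 = eigVec M hM ∧
      v.2.1 = eigVec (M.submatrix (Fin.castAdd n) (Fin.castAdd n))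
        (hM.submatrix (Fin.castAdd n)) ∧
      v.2.2 = eigVec (M.submatrix (Fin.natAdd m) (Fin.natAdd m))
        (hM.submatrix (Fin.natAdd m)) }

/-- Top-left `p × p` block. -/
def blockTL (p q : ℕ) (X : Matrix (Fin (p + q)) (Fin (p + q)) ℂ) : Matrix (Fin p) (Fin p) ℂ :=
  X.submatrix (Fin.castAdd q) (Fin.castAdd q)

/-- Top-right `p × q` block. -/
def blockTR (p q : ℕ) (X : Matrix (Fin (p + q)) (Fin (p + q)) ℂ) : Matrix (Fin p) (Fin q) ℂ :=
  X.submatrix (Fin.castAdd q) (Fin.natAdd p)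

/-- Bottom-left `q × p` block. -/
def blockBL (p q : ℕ) (X : Matrix (Fin (p + q)) (Fin (p + q)) ℂ) : Matrix (Fin q) (Fin p) ℂ :=
  X.submatrix (Fin.natAdd p) (Fin.castAdd q)

/-- Bottom-right `q × q` block. -/
def blockBR (p q : ℕ) (X : Matrix (Fin (p + q)) (Fin (p + q)) ℂ) : Matrix (Fin q) (Fin q) ℂ :=
  X.submatrix (Fin.natAdd p) (Fin.natAdd p)

/-- `λ* = (−λ_k, …, −λ_1)`. -/
def starVec {k : ℕ} (x : Fin k → ℝ) : Fin k → ℝ := fun i => -x i.rev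

/-- `ŝ^{p,q} = (s₁, …, s_q, 0, …, 0, −s_q, …, −s₁) ∈ ℝ^{p+q}` (with `p − q` middle zeros). -/
noncomputable def hatPQ (p q : ℕ) (s : Fin q → ℝ) : Fin (p + q) → ℝ :=
  fun i =>
    if h : (i : ℕ) < q then s ⟨i, h⟩
    else if h' : (i : ℕ) < p then 0
    else -s ⟨p + q - 1 - i, by have := i.isLt; omega⟩

/-- The cone `A(p,q)`: pairs `(e(X), s(X₁₂))` for `X` Hermitian of size `p+q`. -/
def coneA (p q : ℕ) : Set ((Fin (p + q) → ℝ) × (Fin q → ℝ)) :=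
  { v | ∃ (X : Matrix (Fin (p + q)) (Fin (p + q)) ℂ) (hX : X.IsHermitian),
      v.1 = eigVec X hX ∧ ∀ i : Fin q, v.2 i = sval (blockTR p q X) (i : ℕ) }

/-- The cone `S(p,q)`: triples `(s(X), s(X₁₂), s(X₂₁))`. -/
def coneS (p q : ℕ) : Set ((Fin (p + q) → ℝ) × (Fin q → ℝ) × (Fin q → ℝ)) :=
  { v | ∃ X : Matrix (Fin (p + q)) (Fin (p + q)) ℂ,
      (∀ i : Fin (p + q), v.1 i = sval X (i : ℕ)) ∧
      (∀ i : Fin q, v.2.1 i = sval (blockTR p q X) (i : ℕ)) ∧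
      (∀ i : Fin q, v.2.2 i = sval (blockBL p q X) (i : ℕ)) }

/-- The cone `T(p,q)`: triples `(s(X), s(X₁₁), s(X₂₂))`. -/
def coneT (p q : ℕ) : Set ((Fin (p + q) → ℝ) × (Fin p → ℝ) × (Fin q → ℝ)) :=
  { v | ∃ X : Matrix (Fin (p + q)) (Fin (p + q)) ℂ,
      (∀ i : Fin (p + q), v.1 i = sval X (i : ℕ)) ∧
      (∀ i : Fin p, v.2.1 i = sval (blockTL p q X) (i : ℕ)) ∧
      (∀ i : Fin q, v.2.2 i = sval (blockBR p q X) (i : ℕ)) }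

/-- `μ(A) = (a_r − r ≥ … ≥ a₂ − 2 ≥ a₁ − 1)` as a decreasing real vector, for
`A = {a₁ < … < a_r}` a subset of `[n]` (0-based indexing internally). -/
noncomputable def muVec {n r : ℕ} (A : Finset (Fin n)) (h : A.card = r) : Fin r → ℝ :=
  fun k => (((A.orderIsoOfFin h k.rev : Fin n) : ℕ) : ℝ) - ((k.rev : ℕ) : ℝ)

/-- `A^o = {ℓ + 1 − a : a ∈ A}` inside `[ℓ]`. -/
def opp {n : ℕ} (A : Finset (Fin n)) : Finset (Fin n) := A.image Fin.rev

/-- `|s|_{K ∩ [q]}` where `K ⊆ [n]`, `s ∈ ℝ^q` and `[q]` is viewed inside `[n]`. -/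
noncomputable def sumRestr {n q : ℕ} (s : Fin q → ℝ) (K : Finset (Fin n)) : ℝ :=
  ∑ i ∈ K, (if h : (i : ℕ) < q then s ⟨i, h⟩ else 0)

/-- The augmented matrix `Ŷ^{p,q} = [[0, Y], [Yᴴ, 0]]` of size `p + q`. -/
def hatM (p q : ℕ) (Y : Matrix (Fin p) (Fin q) ℂ) : Matrix (Fin (p + q)) (Fin (p + q)) ℂ :=
  Matrix.reindex finSumFinEquiv finSumFinEquiv (Matrix.fromBlocks 0 Y Yᴴ 0)

/-!
Let `J = diag(1, …, 1, -1, …, -1)`. Then `X - J X J` is twice the augmented matrix of `X₁₂`, whose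
eigenvalues are `± sᵢ` (and zeros), while `-J X J` has spectrum `λ*`. Hence `(λ, λ*, 2 ŝ)` lies in
the Horn cone, and the four inequalities are Weyl and Ky Fan inequalities for this triple.

Conversely, if `P` and `Q` together have spectrum `λ`, rotating `diag(P, Q)` by diagonal angle
matrices `cos Θ`, `sin Θ` produces the off-diagonal block `cos Θ P sin Θ - sin Θ Q cos Θ`. With `P`
and `Q` diagonal this gives every `s` for which `2 sᵢ` is at most the `i`-th of two differences of
disjoint pairs of eigenvalues. If no such pairing works, then a single angle, which gives a multiple
of `P - Q`, together with the description of the `2 × 2` Horn cone realizes `s`.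
-/

open Polynomial in
lemma eq_of_antitone_of_prod_X_sub_C_eq {k : ℕ} {f g : Fin k → ℝ} (hf : Antitone f)
    (hg : Antitone g) (h : ∏ i, (X - C (f i : ℂ)) = ∏ i, (X - C (g i : ℂ))) : f = g := by
  have roots_prod (l : Fin k → ℝ) :
      (∏ i, (X - C (l i : ℂ))).roots = (List.ofFn l : Multiset ℝ).map Complex.ofReal := by
    rw [← Fin.univ_val_map, Multiset.map_map,
      ← roots_multiset_prod_X_sub_C (Multiset.map (Complex.ofReal ∘ l) _), Multiset.map_map]
    rfl
  have hperm : (List.ofFn f).Perm (List.ofFn g) := by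
    rw [← Multiset.coe_eq_coe]
    refine Multiset.map_injective Complex.ofReal_injective ?_
    rw [← roots_prod, h, roots_prod]
  exact List.ofFn_injective (hperm.eq_of_sortedGE hf.sortedGE_ofFn hg.sortedGE_ofFn)

section Eigenvalues

variable {k : ℕ} {X : Matrix (Fin k) (Fin k) ℂ}

lemma eigVec_antitone (hX : X.IsHermitian) : Antitone (eigVec X hX) := fun _ _ hij =>
  Tuple.monotone_sort hX.eigenvalues (Fin.rev_le_rev.mpr hij)

open Polynomial in
lemma charpoly_cfc_eq_prod_eigVec (hX : X.IsHermitian) (f : ℝ → ℝ) :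
    (cfc f X).charpoly = ∏ i, (Polynomial.X - C (f (eigVec X hX i) : ℂ)) := by
  rw [hX.charpoly_cfc_eq]
  exact (Equiv.prod_comp (Fin.revPerm.trans (Tuple.sort hX.eigenvalues))
    fun i => Polynomial.X - C (f (hX.eigenvalues i) : ℂ)).symm

open Polynomial in
lemma charpoly_eq_prod_eigVec (hX : X.IsHermitian) :
    X.charpoly = ∏ i, (Polynomial.X - C (eigVec X hX i : ℂ)) := by
  rw [← charpoly_cfc_eq_prod_eigVec hX fun x => x, cfc_id' ℝ X hX.isSelfAdjoint]

open Polynomial in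
lemma eigVec_eq_of_charpoly (hX : X.IsHermitian) {l : Fin k → ℝ} (hl : Antitone l)
    (h : X.charpoly = ∏ i, (Polynomial.X - C (l i : ℂ))) : eigVec X hX = l :=
  eq_of_antitone_of_prod_X_sub_C_eq (eigVec_antitone hX) hl (charpoly_eq_prod_eigVec hX ▸ h)

lemma starVec_starVec {k : ℕ} (l : Fin k → ℝ) : starVec (starVec l) = l := by
  ext i
  simp [starVec]

lemma eigVec_neg (hX : X.IsHermitian) : eigVec (-X) hX.neg = starVec (eigVec X hX) := by
  refine eigVec_eq_of_charpoly _
    (fun i j hij => neg_le_neg (eigVec_antitone hX (Fin.rev_le_rev.mpr hij))) ?_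
  rw [← cfc_neg_id (R := ℝ) (a := X) hX.isSelfAdjoint, charpoly_cfc_eq_prod_eigVec hX]
  exact (Equiv.prod_comp Fin.revPerm _).symm

lemma eigVec_smul (hX : X.IsHermitian) {c : ℝ} (hc : 0 ≤ c) (hcX : (c • X).IsHermitian) :
    eigVec (c • X) hcX = c • eigVec X hX := by
  refine eigVec_eq_of_charpoly _ ((eigVec_antitone hX).const_smul hc) ?_
  rw [← cfc_const_mul_id c X hX.isSelfAdjoint, charpoly_cfc_eq_prod_eigVec hX]
  rfl

lemma isHermitian_diagonal_ofReal {ι : Type*} [DecidableEq ι] (d : ι → ℝ) :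
    (diagonal fun i => (d i : ℂ)).IsHermitian :=
  isHermitian_diagonal_of_self_adjoint _ (funext fun i => Complex.conj_ofReal (d i))

lemma eigVec_diagonal {l : Fin k → ℝ} (hl : Antitone l) :
    eigVec _ (isHermitian_diagonal_ofReal l) = l :=
  eigVec_eq_of_charpoly _ hl (charpoly_diagonal _)

lemma card_filter_eigVec_ne_zero (hX : X.IsHermitian) :
    Finset.card {i | eigVec X hX i ≠ 0} = X.rank := by
  rw [hX.rank_eq_card_non_zero_eigs, Fintype.card_subtype]
  exact Finset.card_equiv (Fin.revPerm.trans (Tuple.sort hX.eigenvalues)) fun i => by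
    simp only [Finset.mem_filter_univ]
    rfl

end Eigenvalues

section SingularValues

variable {a b : ℕ} (Y : Matrix (Fin a) (Fin b) ℂ)

open scoped ComplexOrder in
lemma sval_sq (i : Fin a) :
    sval Y i ^ 2 = eigVec (Y * Yᴴ) (isHermitian_mul_conjTranspose_self Y) i := by
  rw [sval, dif_pos i.isLt, Real.sq_sqrt]
  exact (posSemidef_self_mul_conjTranspose Y).eigenvalues_nonneg _

lemma sval_nonneg (i : ℕ) : 0 ≤ sval Y i := by
  unfold sval
  split_ifs
  exacts [Real.sqrt_nonneg _, le_rfl]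

lemma sval_antitone : Antitone fun i : Fin a => sval Y i := fun i j hij => by
  refine le_of_sq_le_sq ?_ (sval_nonneg Y i)
  rw [sval_sq, sval_sq]
  exact eigVec_antitone _ hij

open scoped ComplexOrder in
lemma sval_eq_zero_of_le {i : ℕ} (hi : b ≤ i) : sval Y i = 0 := by
  by_contra hne
  have hia : i < a := by
    by_contra h
    exact hne (dif_neg h)
  have hsubset : Finset.Iic (⟨i, hia⟩ : Fin a) ⊆ Finset.filter
      (fun j => eigVec (Y * Yᴴ) (isHermitian_mul_conjTranspose_self Y) j ≠ 0) Finset.univ := by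
    intro j hj
    have hpos : 0 < sval Y i := (sval_nonneg Y i).lt_of_ne' hne
    have hle : sval Y i ≤ sval Y j := sval_antitone Y (Finset.mem_Iic.mp hj)
    rw [Finset.mem_filter_univ, ← sval_sq]
    exact (pow_pos (hpos.trans_le hle) 2).ne'
  have hcard := Finset.card_le_card hsubset
  rw [Fin.card_Iic, card_filter_eigVec_ne_zero, rank_self_mul_conjTranspose] at hcard
  exact (Nat.lt_of_succ_le (hcard.trans Y.rank_le_width)).not_ge hi

lemma sval_of_isHermitian {Y : Matrix (Fin a) (Fin a) ℂ} (hY : Y.IsHermitian)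
    (h0 : ∀ i, 0 ≤ eigVec Y hY i) (i : Fin a) : sval Y i = eigVec Y hY i := by
  have heig : eigVec (Y * Yᴴ) (isHermitian_mul_conjTranspose_self Y) =
      fun i => eigVec Y hY i ^ 2 := by
    refine eigVec_eq_of_charpoly _
      (fun i j hij => pow_le_pow_left₀ (h0 j) (eigVec_antitone hY hij) 2) ?_
    rw [hY.eq, ← sq, ← cfc_pow_id (R := ℝ) Y 2 hY.isSelfAdjoint, charpoly_cfc_eq_prod_eigVec hY]
  rw [sval, dif_pos i.isLt, heig, Real.sqrt_sq (h0 i)]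

end SingularValues

section AugmentedMatrix

section CommRing

variable {R m n : Type*} [CommRing R] [Fintype m] [Fintype n] [DecidableEq m] [DecidableEq n]

lemma pow_mul_det_fromBlocks_scalar (t : R) (Y : Matrix m n R) (Z : Matrix n m R) :
    t ^ Fintype.card m * (fromBlocks (scalar m t) (-Y) (-Z) (scalar n t)).det =
      t ^ Fintype.card n * (scalar m (t ^ 2) - Y * Z).det := by
  have hmul : fromBlocks (scalar m t) (-Y) (-Z) (scalar n t) * fromBlocks (scalar m t) 0 Z 1 =
      fromBlocks (scalar m (t ^ 2) - Y * Z) (-Y) 0 (scalar n t) := by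
    have hcomm : scalar n t * Z = Z * scalar m t := by
      ext i j
      simp [diagonal_mul, mul_diagonal, mul_comm]
    simp only [fromBlocks_multiply, hcomm, sq, map_mul, Matrix.neg_mul, Matrix.mul_zero,
      Matrix.mul_one, zero_add, neg_add_cancel, sub_eq_add_neg]
  have hdet := congrArg det hmul
  rw [det_mul, det_fromBlocks_zero₁₂, det_fromBlocks_zero₂₁, det_one, mul_one] at hdet
  simpa [mul_comm] using hdet

open Polynomial in
lemma X_pow_mul_charpoly_fromBlocks_zero (Y : Matrix m n R) (Z : Matrix n m R) :
    X ^ Fintype.card m * (fromBlocks 0 Y Z 0).charpoly =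
      X ^ Fintype.card n * (Y * Z).charpoly.comp (X ^ 2) := by
  have hcomp : (Y * Z).charpoly.comp (X ^ 2) =
      (scalar m (X ^ 2) - Y.map C * Z.map C : Matrix m m R[X]).det := by
    rw [charpoly, ← coe_compRingHom_apply, RingHom.map_det, ← Matrix.map_mul]
    congr 1
    ext i j : 1
    by_cases hij : i = j <;> simp [hij, -Matrix.map_mul]
  rw [hcomp, ← pow_mul_det_fromBlocks_scalar, charpoly, charmatrix_fromBlocks]
  simp only [charmatrix, map_zero, sub_zero]

end CommRing

variable {p q : ℕ}

lemma hatPQ_antitone {s : Fin q → ℝ} (hs : Antitone s) (h0 : ∀ i, 0 ≤ s i) :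
    Antitone (hatPQ p q s) := by
  intro i j (hij : (i : ℕ) ≤ j)
  unfold hatPQ
  split_ifs with hj hi hjp hi hip hi hip
  · exact hs hij
  · omega
  · omega
  · exact h0 _
  · exact le_rfl
  · omega
  · exact (neg_nonpos.mpr (h0 _)).trans (h0 _)
  · exact neg_nonpos.mpr (h0 _)
  · exact neg_le_neg (hs (Fin.mk_le_mk.mpr (by omega)))

lemma prod_hatPQ {M : Type*} [CommMonoid M] {r : ℕ} (s : Fin q → ℝ) (g : ℝ → M) :
    ∏ i, g (hatPQ (q + r) q s i) = (∏ i, g (s i)) * g 0 ^ r * ∏ i, g (-s i) := by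
  rw [Fin.prod_univ_add, Fin.prod_univ_add]
  congr 1
  · congr 1
    · simp [hatPQ]
    · simp [hatPQ]
  · rw [← Equiv.prod_comp Fin.revPerm]
    refine Finset.prod_congr rfl fun i _ => ?_
    have hge : ¬q + r + (q - (i + 1)) < q := by omega
    have hrev : q + r + q - 1 - (q + r + (q - (i + 1))) = i := by omega
    simp [hatPQ, hge, hrev]

lemma isHermitian_hatM (Y : Matrix (Fin p) (Fin q) ℂ) : (hatM p q Y).IsHermitian :=
  (IsHermitian.fromBlocks isHermitian_zero rfl isHermitian_zero).submatrix _

open Polynomial in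
lemma charpoly_hatM (h : q ≤ p) (Y : Matrix (Fin p) (Fin q) ℂ) :
    (hatM p q Y).charpoly = ∏ i, (X - C (hatPQ p q (fun i => sval Y i) i : ℂ)) := by
  obtain ⟨r, rfl⟩ := Nat.exists_eq_add_of_le h
  rw [hatM, charpoly_reindex, prod_hatPQ (fun i => sval Y i) fun x => X - C (x : ℂ)]
  refine mul_left_cancel₀ (pow_ne_zero (Fintype.card (Fin (q + r))) (X_ne_zero (R := ℂ))) ?_
  rw [X_pow_mul_charpoly_fromBlocks_zero,
    charpoly_eq_prod_eigVec (isHermitian_mul_conjTranspose_self Y), prod_comp, Fin.prod_univ_add]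
  have hfactor (x : ℝ) :
      (X - C ((x ^ 2 : ℝ) : ℂ)).comp (X ^ 2) = (X - C (x : ℂ)) * (X - C ((-x : ℝ) : ℂ)) := by
    simp only [sub_comp, X_comp, C_comp, Complex.ofReal_pow, Complex.ofReal_neg, C_neg]
    rw [C_pow]
    ring
  simp only [← sval_sq, hfactor, Finset.prod_mul_distrib, Fin.val_castAdd, Fin.val_natAdd,
    sval_eq_zero_of_le Y (Nat.le_add_right q _), Fintype.card_fin]
  simp only [Complex.ofReal_neg, Complex.ofReal_zero, map_neg, map_zero, sub_neg_eq_add,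
    sub_zero, neg_zero, Finset.prod_const, Finset.card_univ, Fintype.card_fin]
  ring

lemma eigVec_hatM (h : q ≤ p) (Y : Matrix (Fin p) (Fin q) ℂ) :
    eigVec (hatM p q Y) (isHermitian_hatM Y) = hatPQ p q fun i => sval Y i :=
  eigVec_eq_of_charpoly _
    (hatPQ_antitone (fun _ _ hij => sval_antitone Y (Fin.castLE_le_castLE_iff h |>.mpr hij))
      fun _ => sval_nonneg Y _)
    (charpoly_hatM h Y)

end AugmentedMatrix

section SignConjugation

/-- The signature matrix `diag(1, …, 1, -1, …, -1)` with `p` entries `1` and `q` entries `-1`;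
conjugation by it changes the sign of the off-diagonal blocks. -/
def signMatrix (p q : ℕ) : Matrix (Fin (p + q)) (Fin (p + q)) ℂ :=
  diagonal (Fin.append 1 (-1))

variable {p q : ℕ}

lemma signMatrix_mul_self : signMatrix p q * signMatrix p q = 1 := by
  rw [signMatrix, diagonal_mul_diagonal, ← diagonal_one]
  congr 1
  ext i
  cases i using Fin.addCases <;> simp

lemma isHermitian_signMatrix : (signMatrix p q).IsHermitian := by
  refine isHermitian_diagonal_iff.mpr fun i => ?_
  cases i using Fin.addCases <;> simp [IsSelfAdjoint]

variable {X : Matrix (Fin (p + q)) (Fin (p + q)) ℂ}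

lemma isHermitian_signMatrix_conj (hX : X.IsHermitian) :
    (signMatrix p q * X * signMatrix p q).IsHermitian := by
  simpa only [isHermitian_signMatrix.eq] using
    isHermitian_mul_mul_conjTranspose (signMatrix p q) hX

lemma eigVec_signMatrix_conj (hX : X.IsHermitian) :
    eigVec (signMatrix p q * X * signMatrix p q) (isHermitian_signMatrix_conj hX) =
      eigVec X hX := by
  refine eigVec_eq_of_charpoly _ (eigVec_antitone hX) ?_
  rw [charpoly_mul_comm, ← mul_assoc, signMatrix_mul_self, one_mul, charpoly_eq_prod_eigVec hX]

lemma add_neg_signMatrix_conj (hX : X.IsHermitian) :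
    X + -(signMatrix p q * X * signMatrix p q) = (2 : ℝ) • hatM p q (blockTR p q X) := by
  ext i j
  cases i using Fin.addCases <;> cases j using Fin.addCases <;>
    simp [signMatrix, hatM, blockTR, two_mul, hX.apply]

lemma mem_Horn_of_mem_coneA (h : q ≤ p) {l : Fin (p + q) → ℝ} {s : Fin q → ℝ}
    (hls : (l, s) ∈ coneA p q) : (l, starVec l, (2 : ℝ) • hatPQ p q s) ∈ Horn (p + q) := by
  obtain ⟨X, hX, rfl, hs⟩ := hls
  obtain rfl : s = fun i : Fin q => sval (blockTR p q X) i := funext hs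
  have hY := isHermitian_signMatrix_conj hX
  have hsum := add_neg_signMatrix_conj hX
  refine ⟨X, _, hX, hY.neg, rfl, ?_, ?_⟩
  · rw [eigVec_neg hY, eigVec_signMatrix_conj hX]
  · rw [← eigVec_hatM h, ← eigVec_smul (isHermitian_hatM _) zero_le_two (hsum ▸ hX.add hY.neg)]
    change eigVec _ _ = eigVec _ _
    congr 1
    exact hsum.symm

end SignConjugation

section HornInequalities

variable {k : ℕ} {X Y : Matrix (Fin k) (Fin k) ℂ}

/-- The quadratic form `x ↦ ⟪x, X x⟫` of a Hermitian matrix `X`, as a real number. -/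
noncomputable def quadForm (X : Matrix (Fin k) (Fin k) ℂ) (x : EuclideanSpace ℂ (Fin k)) : ℝ :=
  (inner ℂ x (X.toEuclideanLin x)).re

/-- An orthonormal eigenbasis of a Hermitian matrix, in the order of `eigVec`. -/
noncomputable def eigBasis (X : Matrix (Fin k) (Fin k) ℂ) (hX : X.IsHermitian) :
    OrthonormalBasis (Fin k) ℂ (EuclideanSpace ℂ (Fin k)) :=
  hX.eigenvectorBasis.reindex (Fin.revPerm.trans (Tuple.sort hX.eigenvalues)).symm

lemma toEuclideanLin_eigBasis (hX : X.IsHermitian) (i : Fin k) :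
    X.toEuclideanLin (eigBasis X hX i) = (eigVec X hX i : ℂ) • eigBasis X hX i := by
  have h := congrArg (WithLp.toLp 2)
    (hX.mulVec_eigenvectorBasis (Tuple.sort hX.eigenvalues i.rev))
  simpa [eigBasis, eigVec, toLpLin_apply] using h

lemma quadForm_add (x : EuclideanSpace ℂ (Fin k)) :
    quadForm (X + Y) x = quadForm X x + quadForm Y x := by
  simp only [quadForm, map_add, LinearMap.add_apply, inner_add_right, Complex.add_re]

lemma quadForm_eq_sum (hX : X.IsHermitian) (x : EuclideanSpace ℂ (Fin k)) :
    quadForm X x = ∑ i, eigVec X hX i * ‖inner ℂ (eigBasis X hX i) x‖ ^ 2 := by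
  have hsymm := isSymmetric_toEuclideanLin_iff.mpr hX
  rw [quadForm, ← (eigBasis X hX).sum_inner_mul_inner, Complex.re_sum]
  refine Finset.sum_congr rfl fun i _ => ?_
  rw [← hsymm, toEuclideanLin_eigBasis, inner_smul_left, Complex.conj_ofReal, mul_left_comm,
    Complex.re_ofReal_mul, ← inner_conj_symm, Complex.conj_mul', ← Complex.ofReal_pow,
    Complex.ofReal_re]

lemma quadForm_le (hX : X.IsHermitian) {i : Fin k} {x : EuclideanSpace ℂ (Fin k)}
    (hx : ∀ j < i, inner ℂ (eigBasis X hX j) x = 0) :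
    quadForm X x ≤ eigVec X hX i * ‖x‖ ^ 2 := by
  rw [quadForm_eq_sum hX, ← (eigBasis X hX).sum_sq_norm_inner_right, Finset.mul_sum]
  refine Finset.sum_le_sum fun j _ => ?_
  rcases lt_or_ge j i with hji | hij
  · simp [hx j hji]
  · gcongr
    exact eigVec_antitone hX hij

lemma le_quadForm (hX : X.IsHermitian) {i : Fin k} {x : EuclideanSpace ℂ (Fin k)}
    (hx : ∀ j > i, inner ℂ (eigBasis X hX j) x = 0) :
    eigVec X hX i * ‖x‖ ^ 2 ≤ quadForm X x := by
  rw [quadForm_eq_sum hX, ← (eigBasis X hX).sum_sq_norm_inner_right, Finset.mul_sum]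
  refine Finset.sum_le_sum fun j _ => ?_
  rcases lt_or_ge i j with hij | hji
  · simp [hx j hij]
  · gcongr
    exact eigVec_antitone hX hji

lemma exists_ne_zero_inner_eq_zero {𝕜 E : Type*} [RCLike 𝕜] [NormedAddCommGroup E]
    [InnerProductSpace 𝕜 E] {s : Finset E} (hs : s.card < Module.finrank 𝕜 E) :
    ∃ x : E, x ≠ 0 ∧ ∀ v ∈ s, inner 𝕜 v x = 0 := by
  have : FiniteDimensional 𝕜 E := .of_finrank_pos (Nat.zero_lt_of_lt hs)
  have hspan : Submodule.span 𝕜 (s : Set E) ≠ ⊤ := by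
    intro htop
    have := finrank_span_finset_le_card (R := 𝕜) s
    rw [Set.finrank, htop, finrank_top] at this
    exact hs.not_ge this
  obtain ⟨x, hx, hx0⟩ := Submodule.exists_mem_ne_zero_of_ne_bot
    (mt Submodule.orthogonal_eq_bot_iff.mp hspan)
  exact ⟨x, hx0, fun v hv => hx v (Submodule.subset_span hv)⟩

lemma weyl_inequality_of_mem_Horn {l m n : Fin k → ℝ} (h : (l, m, n) ∈ Horn k) {i j r : Fin k}
    (hijr : (i : ℕ) + j ≤ r) : n r ≤ l i + m j := by
  classical
  obtain ⟨X, Y, hX, hY, rfl, rfl, rfl⟩ := h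
  set s : Finset (EuclideanSpace ℂ (Fin k)) := (Finset.Iio i).image (eigBasis X hX) ∪
    (Finset.Iio j).image (eigBasis Y hY) ∪ (Finset.Ioi r).image (eigBasis (X + Y) (hX.add hY))
  have hcard : s.card < Module.finrank ℂ (EuclideanSpace ℂ (Fin k)) := by
    calc s.card
      _ ≤ (Finset.Iio i).card + (Finset.Iio j).card + (Finset.Ioi r).card := by
        refine (Finset.card_union_le _ _).trans (add_le_add ?_ Finset.card_image_le)
        exact (Finset.card_union_le _ _).trans
          (add_le_add Finset.card_image_le Finset.card_image_le)
      _ < Module.finrank ℂ (EuclideanSpace ℂ (Fin k)) := by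
        rw [Fin.card_Iio, Fin.card_Iio, Fin.card_Ioi, finrank_euclideanSpace_fin]
        omega
  obtain ⟨x, hx0, hx⟩ := exists_ne_zero_inner_eq_zero hcard
  simp only [s, Finset.forall_mem_union, Finset.forall_mem_image, Finset.mem_Iio,
    Finset.mem_Ioi] at hx
  have hpos : 0 < ‖x‖ ^ 2 := pow_pos (norm_pos_iff.mpr hx0) 2
  refine le_of_mul_le_mul_right ?_ hpos
  calc eigVec (X + Y) _ r * ‖x‖ ^ 2
    _ ≤ quadForm (X + Y) x := le_quadForm (hX.add hY) fun _ ha => hx.2 ha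
    _ = quadForm X x + quadForm Y x := quadForm_add x
    _ ≤ eigVec X hX i * ‖x‖ ^ 2 + eigVec Y hY j * ‖x‖ ^ 2 :=
      add_le_add (quadForm_le hX fun _ ha => hx.1.1 ha) (quadForm_le hY fun _ ha => hx.1.2 ha)
    _ = (eigVec X hX i + eigVec Y hY j) * ‖x‖ ^ 2 := (add_mul _ _ _).symm

lemma sum_mul_le_sum_Iic {e d : Fin k → ℝ} (he : Antitone e) (hd0 : ∀ i, 0 ≤ d i)
    (hd1 : ∀ i, d i ≤ 1) {m : Fin k} (hd : ∑ i, d i = m + 1) :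
    ∑ i, e i * d i ≤ ∑ i ∈ Finset.Iic m, e i := by
  have hterm (i : Fin k) :
      (e i - e m) * d i ≤ if i ∈ Finset.Iic m then e i - e m else 0 := by
    split_ifs with hi
    · exact mul_le_of_le_one_right (sub_nonneg.mpr (he (Finset.mem_Iic.mp hi))) (hd1 i)
    · exact mul_nonpos_of_nonpos_of_nonneg
        (sub_nonpos.mpr (he (not_le.mp (mt Finset.mem_Iic.mpr hi)).le)) (hd0 i)
  have hsum := Finset.sum_le_sum fun i (_ : i ∈ Finset.univ) => hterm i
  simp only [sub_mul, Finset.sum_sub_distrib, ← Finset.mul_sum, hd, Finset.sum_ite_mem,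
    Finset.univ_inter, Finset.sum_const, Fin.card_Iic, nsmul_eq_mul] at hsum
  push_cast at hsum
  linarith

lemma sum_quadForm_le (hX : X.IsHermitian) {ι : Type*} {w : ι → EuclideanSpace ℂ (Fin k)}
    (hw : Orthonormal ℂ w) {s : Finset ι} {m : Fin k} (hs : s.card = m + 1) :
    ∑ t ∈ s, quadForm X (w t) ≤ ∑ i ∈ Finset.Iic m, eigVec X hX i := by
  simp only [quadForm_eq_sum hX]
  rw [Finset.sum_comm]
  simp only [← Finset.mul_sum]
  refine sum_mul_le_sum_Iic (eigVec_antitone hX) (fun _ => by positivity) (fun i => ?_) ?_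
  · simp only [norm_inner_symm]
    simpa using hw.sum_inner_products_le (eigBasis X hX i) (s := s)
  · rw [Finset.sum_comm]
    simp [OrthonormalBasis.sum_sq_norm_inner_right, hw.norm_eq_one, hs]

lemma sum_quadForm_eigBasis (hX : X.IsHermitian) (s : Finset (Fin k)) :
    ∑ i ∈ s, quadForm X (eigBasis X hX i) = ∑ i ∈ s, eigVec X hX i := by
  refine Finset.sum_congr rfl fun i _ => ?_
  simp [quadForm, toEuclideanLin_eigBasis]

lemma kyFan_inequality_of_mem_Horn {l m n : Fin k → ℝ} (h : (l, m, n) ∈ Horn k) (r : Fin k) :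
    ∑ i ∈ Finset.Iic r, n i ≤ ∑ i ∈ Finset.Iic r, l i + ∑ i ∈ Finset.Iic r, m i := by
  obtain ⟨X, Y, hX, hY, rfl, rfl, rfl⟩ := h
  have horth := (eigBasis (X + Y) (hX.add hY)).orthonormal
  rw [← sum_quadForm_eigBasis (hX.add hY)]
  simp only [quadForm_add, Finset.sum_add_distrib]
  exact add_le_add (sum_quadForm_le hX horth (Fin.card_Iic r))
    (sum_quadForm_le hY horth (Fin.card_Iic r))

end HornInequalities

section BlockRotation

variable {n : ℕ}

/-- The orthogonal matrix on `ℂⁿ ⊕ ℂⁿ` which rotates, for each `i`, the plane spanned by the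
`i`-th basis vectors of the two summands by the angle `θ i`. -/
noncomputable def blockRotation (θ : Fin n → ℝ) : Matrix (Fin n ⊕ Fin n) (Fin n ⊕ Fin n) ℂ :=
  fromBlocks (diagonal fun i => (Real.cos (θ i) : ℂ)) (-diagonal fun i => (Real.sin (θ i) : ℂ))
    (diagonal fun i => (Real.sin (θ i) : ℂ)) (diagonal fun i => (Real.cos (θ i) : ℂ))

lemma conjTranspose_blockRotation (θ : Fin n → ℝ) :
    (blockRotation θ)ᴴ = blockRotation (-θ) := by
  simp [blockRotation, fromBlocks_conjTranspose, diagonal_conjTranspose, Pi.star_def,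
    ← Complex.cos_conj, ← Complex.sin_conj, diagonal_neg]

lemma blockRotation_neg_mul_self (θ : Fin n → ℝ) :
    blockRotation (-θ) * blockRotation θ = 1 := by
  have hcos_sin (i : Fin n) : Complex.cos (θ i) * Complex.cos (θ i) +
      Complex.sin (θ i) * Complex.sin (θ i) = 1 := by
    rw [← sq, ← sq, Complex.cos_sq_add_sin_sq]
  simp only [blockRotation, fromBlocks_multiply, ← fromBlocks_one]
  congr 1 <;> ext i j <;> by_cases hij : i = j <;>
    simp [hij, diagonal_mul_diagonal, mul_comm, hcos_sin, add_comm, one_apply]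

lemma mem_coneA_of_blockRotation {P Q : Matrix (Fin n) (Fin n) ℂ} (hP : P.IsHermitian)
    (hQ : Q.IsHermitian) {l : Fin (n + n) → ℝ} (hl : Antitone l)
    (hPQ : P.charpoly * Q.charpoly = ∏ i, (Polynomial.X - Polynomial.C (l i : ℂ)))
    (θ : Fin n → ℝ) {Y : Matrix (Fin n) (Fin n) ℂ} (hY : ∀ i j, Y i j =
      Real.cos (θ i) * P i j * Real.sin (θ j) - Real.sin (θ i) * Q i j * Real.cos (θ j)) :
    (l, fun i : Fin n => sval Y i) ∈ coneA n n := by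
  set M := blockRotation θ * fromBlocks P 0 0 Q * (blockRotation θ)ᴴ with hM_def
  have hM : M.IsHermitian :=
    isHermitian_mul_mul_conjTranspose _ (hP.fromBlocks (conjTranspose_zero) hQ)
  rw [conjTranspose_blockRotation] at hM_def
  have hcharpoly : (reindex finSumFinEquiv finSumFinEquiv M).charpoly =
      ∏ i, (Polynomial.X - Polynomial.C (l i : ℂ)) := by
    rw [charpoly_reindex, hM_def, charpoly_mul_comm, ← mul_assoc,
      blockRotation_neg_mul_self, one_mul, charpoly_fromBlocks_zero₁₂, hPQ]
  have hblock : blockTR n n (reindex finSumFinEquiv finSumFinEquiv M) = Y := by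
    ext i j
    simp only [blockTR, reindex_apply, submatrix_apply, finSumFinEquiv_symm_apply_castAdd,
      finSumFinEquiv_symm_apply_natAdd, hM_def, blockRotation, fromBlocks_multiply]
    simp [hY, sub_eq_add_neg]
  exact ⟨_, hM.submatrix _, (eigVec_eq_of_charpoly _ hl hcharpoly).symm,
    fun i => congrArg (sval · i) hblock.symm⟩

lemma prod_perm_castAdd_mul_prod_perm_natAdd {M : Type*} [CommMonoid M]
    (σ : Equiv.Perm (Fin (n + n))) (g : Fin (n + n) → M) :
    (∏ i, g (σ (Fin.castAdd n i))) * ∏ i, g (σ (Fin.natAdd n i)) = ∏ i, g i := by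
  rw [← Equiv.prod_comp σ, Fin.prod_univ_add]

lemma exists_cos_mul_sin_eq {c : ℝ} (hc0 : 0 ≤ c) (hc1 : 2 * c ≤ 1) :
    ∃ θ : ℝ, Real.cos θ * Real.sin θ = c := by
  refine ⟨Real.arcsin (2 * c) / 2, ?_⟩
  have h := Real.sin_two_mul (Real.arcsin (2 * c) / 2)
  rw [mul_div_cancel₀ _ two_ne_zero, Real.sin_arcsin (by linarith) hc1] at h
  linarith

lemma exists_cos_mul_sin_mul_eq {c d : ℝ} (hc : 0 ≤ c) (hcd : 2 * c ≤ d) :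
    ∃ θ : ℝ, Real.cos θ * Real.sin θ * d = c := by
  rcases (mul_nonneg zero_le_two hc).trans hcd |>.eq_or_lt with rfl | hd
  · exact ⟨0, by linarith⟩
  · obtain ⟨θ, hθ⟩ := exists_cos_mul_sin_eq (div_nonneg hc hd.le)
      (by rwa [← mul_div_assoc, div_le_one hd])
    exact ⟨θ, by rw [hθ, div_mul_cancel₀ _ hd.ne']⟩

lemma sval_diagonal {s : Fin n → ℝ} (hs : Antitone s) (hs0 : ∀ i, 0 ≤ s i) (i : Fin n) :
    sval (diagonal fun i => (s i : ℂ)) i = s i := by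
  have heig := eigVec_diagonal hs
  rw [sval_of_isHermitian (isHermitian_diagonal_ofReal s) (by rwa [heig]), heig]

lemma mem_coneA_of_perm {l : Fin (n + n) → ℝ} (hl : Antitone l) (σ : Equiv.Perm (Fin (n + n)))
    {s : Fin n → ℝ} (hs : Antitone s) (hs0 : ∀ i, 0 ≤ s i)
    (h : ∀ i, 2 * s i ≤ l (σ (Fin.castAdd n i)) - l (σ (Fin.natAdd n i))) :
    (l, s) ∈ coneA n n := by
  choose θ hθ using fun i => exists_cos_mul_sin_mul_eq (hs0 i) (h i)
  convert mem_coneA_of_blockRotation (Y := diagonal fun i => (s i : ℂ))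
    (isHermitian_diagonal_ofReal fun i => l (σ (Fin.castAdd n i)))
    (isHermitian_diagonal_ofReal fun i => l (σ (Fin.natAdd n i))) hl ?_ θ ?_ using 2
  · exact funext fun i => (sval_diagonal hs hs0 i).symm
  · simp only [charpoly_diagonal]
    exact prod_perm_castAdd_mul_prod_perm_natAdd σ fun i =>
      Polynomial.X - Polynomial.C (l i : ℂ)
  · intro i j
    rcases eq_or_ne i j with rfl | hij
    · simp only [diagonal_apply_eq, ← hθ]
      push_cast
      ring
    · simp [hij]

lemma mem_coneA_of_mem_Horn {l : Fin (n + n) → ℝ} (hl : Antitone l)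
    (σ : Equiv.Perm (Fin (n + n))) {t : Fin n → ℝ}
    (ht : (fun i => l (σ (Fin.castAdd n i)), starVec fun i => l (σ (Fin.natAdd n i)), t) ∈ Horn n)
    (ht0 : ∀ i, 0 ≤ t i) {c : ℝ} (hc0 : 0 ≤ c) (hc1 : 2 * c ≤ 1) : (l, c • t) ∈ coneA n n := by
  obtain ⟨A, B, hA, hB, hlA, hlB, rfl⟩ := ht
  obtain ⟨θ, hθ⟩ := exists_cos_mul_sin_eq hc0 hc1
  have hC := (hA.add hB).smul (IsSelfAdjoint.all c)
  have heig := eigVec_smul (hA.add hB) hc0 hC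
  convert mem_coneA_of_blockRotation (Y := c • (A + B)) hA hB.neg hl ?_ (fun _ => θ) ?_ using 2
  · refine funext fun i => ?_
    rw [sval_of_isHermitian hC fun i => ?_, heig]
    rw [heig]
    exact mul_nonneg hc0 (ht0 i)
  · rw [charpoly_eq_prod_eigVec hA, charpoly_eq_prod_eigVec hB.neg, eigVec_neg hB, ← hlA, ← hlB,
      starVec_starVec]
    exact prod_perm_castAdd_mul_prod_perm_natAdd σ fun i =>
      Polynomial.X - Polynomial.C (l i : ℂ)
  · intro i j
    rw [Matrix.smul_apply, Matrix.add_apply, Matrix.neg_apply, ← hθ, Complex.real_smul,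
      Complex.ofReal_mul]
    ring

end BlockRotation

section TwoByTwo

lemma charpoly_map_ofReal_fin_two {A : Matrix (Fin 2) (Fin 2) ℝ} {l : Fin 2 → ℝ}
    (htrace : A.trace = l 0 + l 1) (hdet : A.det = l 0 * l 1) :
    (A.map Complex.ofReal).charpoly = ∏ i, (Polynomial.X - Polynomial.C (l i : ℂ)) := by
  refine (charpoly_map A Complex.ofRealHom).trans ?_
  rw [charpoly_fin_two, htrace, hdet, Fin.prod_univ_two]
  simp only [Polynomial.map_add, Polynomial.map_sub, Polynomial.map_mul, Polynomial.map_pow,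
    Polynomial.map_X, Polynomial.map_C, Complex.ofRealHom_eq_coe, map_add, map_mul]
  ring

lemma mem_Horn_two_of_trace_eq_of_det_eq {A B : Matrix (Fin 2) (Fin 2) ℝ} (hA : A.IsHermitian)
    (hB : B.IsHermitian) {α β γ : Fin 2 → ℝ} (hα : Antitone α) (hβ : Antitone β)
    (hγ : Antitone γ) (hA_trace : A.trace = α 0 + α 1) (hA_det : A.det = α 0 * α 1)
    (hB_trace : B.trace = β 0 + β 1) (hB_det : B.det = β 0 * β 1)
    (htrace : (A + B).trace = γ 0 + γ 1) (hdet : (A + B).det = γ 0 * γ 1) :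
    (α, β, γ) ∈ Horn 2 := by
  have hconj (x : ℝ) : Complex.ofReal (star x) = star (x : ℂ) := (Complex.conj_ofReal x).symm
  have hAB : A.map Complex.ofReal + B.map Complex.ofReal = (A + B).map Complex.ofReal :=
    (Matrix.map_add _ Complex.ofReal_add A B).symm
  exact ⟨A.map Complex.ofReal, B.map Complex.ofReal, hA.map _ hconj, hB.map _ hconj,
    (eigVec_eq_of_charpoly _ hα (charpoly_map_ofReal_fin_two hA_trace hA_det)).symm,
    (eigVec_eq_of_charpoly _ hβ (charpoly_map_ofReal_fin_two hB_trace hB_det)).symm,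
    (eigVec_eq_of_charpoly _ hγ (hAB ▸ charpoly_map_ofReal_fin_two htrace hdet)).symm⟩

lemma mul_mem_segment_of_le {α β γ : Fin 2 → ℝ} (hγ : Antitone γ)
    (htrace : γ 0 + γ 1 = α 0 + α 1 + (β 0 + β 1)) (h₀ : γ 0 ≤ α 0 + β 0)
    (h₁ : γ 1 ≤ α 0 + β 1) (h₂ : γ 1 ≤ α 1 + β 0) :
    γ 0 * γ 1 ∈ segment ℝ ((α 0 + β 0) * (α 1 + β 1)) ((α 0 + β 1) * (α 1 + β 0)) := by
  have hlower : (α 0 + β 0) * (α 1 + β 1) ≤ γ 0 * γ 1 := by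
    have h := mul_nonneg (sub_nonneg.mpr h₀) (sub_nonneg.mpr ((hγ zero_le_one).trans h₀))
    rw [show α 1 + β 1 = γ 0 + γ 1 - (α 0 + β 0) by linarith]
    linarith
  have hupper : γ 0 * γ 1 ≤ (α 0 + β 1) * (α 1 + β 0) := by
    have h := mul_nonneg (sub_nonneg.mpr h₁) (sub_nonneg.mpr h₂)
    rw [show γ 0 = α 0 + β 1 + (α 1 + β 0) - γ 1 by linarith]
    linarith
  rw [segment_eq_Icc (hlower.trans hupper)]
  exact ⟨hlower, hupper⟩

lemma mem_Horn_two {α β γ : Fin 2 → ℝ} (hα : Antitone α) (hβ : Antitone β) (hγ : Antitone γ)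
    (htrace : γ 0 + γ 1 = α 0 + α 1 + (β 0 + β 1)) (h₀ : γ 0 ≤ α 0 + β 0)
    (h₁ : γ 1 ≤ α 0 + β 1) (h₂ : γ 1 ≤ α 1 + β 0) : (α, β, γ) ∈ Horn 2 := by
  obtain ⟨u, w, hu, hw, huw, hdet⟩ := mul_mem_segment_of_le hγ htrace h₀ h₁ h₂
  rw [smul_eq_mul, smul_eq_mul] at hdet
  have hsqrt := Real.mul_self_sqrt (mul_nonneg hu hw)
  obtain rfl : w = 1 - u := by linarith
  -- The conjugate of `diag(β₀, β₁)` by the rotation of angle `θ`, where `cos² θ = u`.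
  let B : Matrix (Fin 2) (Fin 2) ℝ :=
    !![u * β 0 + (1 - u) * β 1, √(u * (1 - u)) * (β 0 - β 1);
      √(u * (1 - u)) * (β 0 - β 1), (1 - u) * β 0 + u * β 1]
  have hB : B.IsHermitian := by ext i j; fin_cases i <;> fin_cases j <;> rfl
  have hB_trace : B.trace = β 0 + β 1 := by
    rw [trace_fin_two_of]
    ring
  refine mem_Horn_two_of_trace_eq_of_det_eq (isHermitian_diagonal α) hB hα hβ hγ
    ((trace_diagonal α).trans (Fin.sum_univ_two α)) (det_diagonal.trans (Fin.prod_univ_two α))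
    hB_trace ?_ ?_ ?_
  · rw [det_fin_two_of]
    linear_combination -(β 0 - β 1) ^ 2 * hsqrt
  · rw [trace_add, trace_diagonal, Fin.sum_univ_two, hB_trace, htrace]
  · rw [det_fin_two]
    simp only [Fin.isValue, Matrix.add_apply, diagonal_apply_eq, of_apply, cons_val', cons_val_zero,
      cons_val_fin_one, cons_val_one, ne_eq, zero_ne_one, not_false_eq_true, diagonal_apply_ne,
      zero_add, one_ne_zero, B]
    linear_combination hdet - (β 0 - β 1) ^ 2 * hsqrt

lemma antitone_fin_two {α : Type*} [Preorder α] {f : Fin 2 → α} (h : f 1 ≤ f 0) : Antitone f :=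
  Fin.antitone_iff_succ_le.mpr fun i => by rwa [Subsingleton.elim i 0]

lemma mem_coneA_two_of_lt {l : Fin (2 + 2) → ℝ} {s : Fin 2 → ℝ} (hl : Antitone l)
    (hs : Antitone s) (hs0 : 0 ≤ s 1) (h03 : 2 * s 0 ≤ l 0 - l 3)
    (hsum : 2 * (s 0 + s 1) ≤ l 0 + l 1 - l 2 - l 3) (h12 : l 1 - l 2 ≤ 2 * s 1)
    (h02 : l 0 - l 2 < 2 * s 0) (h13 : l 1 - l 3 ≤ 2 * s 0) : (l, s) ∈ coneA 2 2 := by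
  have hl01 : l 1 ≤ l 0 := hl (by decide)
  have hl12 : l 2 ≤ l 1 := hl (by decide)
  have hl23 : l 3 ≤ l 2 := hl (by decide)
  have hs01 : s 1 ≤ s 0 := hs (by decide)
  have hs_pos : 0 < s 0 + s 1 := by linarith
  set d := l 0 + l 1 - l 2 - l 3
  have hd : 0 < d := by linarith
  have hcancel : d / (s 0 + s 1) * (s 0 + s 1) = d := div_mul_cancel₀ _ hs_pos.ne'
  have htwo : 2 ≤ d / (s 0 + s 1) := (le_div_iff₀ hs_pos).mpr hsum
  have h0 : d / (s 0 + s 1) * s 0 ≤ l 0 - l 3 := by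
    have hmul : (l 1 - l 2) * s 0 ≤ (l 0 - l 3) * s 1 :=
      calc (l 1 - l 2) * s 0
        _ ≤ 2 * s 1 * s 0 := mul_le_mul_of_nonneg_right h12 (hs0.trans hs01)
        _ = 2 * s 0 * s 1 := mul_right_comm _ _ _
        _ ≤ (l 0 - l 3) * s 1 := mul_le_mul_of_nonneg_right h03 hs0
    rw [div_mul_eq_mul_div, div_le_iff₀ hs_pos]
    linarith
  have h0_ge : 2 * s 0 ≤ d / (s 0 + s 1) * s 0 :=
    mul_le_mul_of_nonneg_right htwo (hs0.trans hs01)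
  -- The factor `d / (s 0 + s 1)` is forced by the trace condition on a triple in `Horn 2`.
  have hHorn : (![l 0, l 1], ![-l 3, -l 2], (d / (s 0 + s 1)) • s) ∈ Horn 2 := by
    refine mem_Horn_two (antitone_fin_two (f := ![l 0, l 1]) hl01)
      (antitone_fin_two (f := ![-l 3, -l 2]) (neg_le_neg hl23))
      (hs.const_smul (zero_le_two.trans htwo)) ?_ ?_ ?_ ?_ <;>
      simp only [Pi.smul_apply, smul_eq_mul, cons_val_zero, cons_val_one, cons_val_fin_one] <;>
      linarith
  have hs_eq : s = ((s 0 + s 1) / d) • (d / (s 0 + s 1)) • s := by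
    rw [smul_smul, div_mul_div_cancel₀ hd.ne', div_self hs_pos.ne', one_smul]
  rw [hs_eq]
  refine mem_coneA_of_mem_Horn hl 1 ?_ ?_ (by positivity) ?_
  · convert hHorn using 2
    · exact funext (Fin.forall_fin_two.mpr ⟨rfl, rfl⟩)
    · exact Prod.ext (funext (Fin.forall_fin_two.mpr ⟨rfl, rfl⟩)) rfl
  · exact fun i => mul_nonneg (by positivity) (hs0.trans (hs (Fin.le_last i)))
  · rwa [← mul_div_assoc, div_le_one hd]

lemma mem_coneA_two {l : Fin (2 + 2) → ℝ} {s : Fin 2 → ℝ} (hl : Antitone l) (hs : Antitone s)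
    (hs0 : 0 ≤ s 1) (h₁ : 2 * s 0 ≤ l 0 - l 3) (h₂ : 2 * s 1 ≤ l 1 - l 3)
    (h₃ : 2 * s 1 ≤ l 0 - l 2) (h₄ : 2 * (s 0 + s 1) ≤ l 0 + l 1 - l 2 - l 3) :
    (l, s) ∈ coneA 2 2 := by
  have hs01 : s 1 ≤ s 0 := hs (by decide)
  have hnonneg : ∀ i, 0 ≤ s i := Fin.forall_fin_two.mpr ⟨hs0.trans hs01, hs0⟩
  by_cases h03_12 : 2 * s 1 ≤ l 1 - l 2
  · exact mem_coneA_of_perm hl (Equiv.swap 2 3) hs hnonneg (Fin.forall_fin_two.mpr ⟨h₁, h03_12⟩)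
  by_cases h02_13 : 2 * s 0 ≤ l 0 - l 2
  · exact mem_coneA_of_perm hl 1 hs hnonneg (Fin.forall_fin_two.mpr ⟨h02_13, h₂⟩)
  by_cases h13_02 : 2 * s 0 ≤ l 1 - l 3
  · exact mem_coneA_of_perm hl (Equiv.swap 0 1 * Equiv.swap 2 3) hs hnonneg
      (Fin.forall_fin_two.mpr ⟨h13_02, h₃⟩)
  exact mem_coneA_two_of_lt hl hs hs0 h₁ h₄ (not_le.mp h03_12).le (not_le.mp h02_13)
    (not_le.mp h13_02).le

end TwoByTwo

theorem stmt_4 (lam : Fin (2 + 2) → ℝ) (s : Fin 2 → ℝ)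
    (h1 : lam 0 ≥ lam 1) (h2 : lam 1 ≥ lam 2) (h3 : lam 2 ≥ lam 3)
    (hs1 : s 0 ≥ s 1) (hs2 : s 1 ≥ 0) :
    (lam, s) ∈ coneA 2 2 ↔
      (lam 0 - lam 3 ≥ 2 * s 0 ∧
       lam 1 - lam 3 ≥ 2 * s 1 ∧
       lam 0 - lam 2 ≥ 2 * s 1 ∧
       lam 0 + lam 1 - lam 2 - lam 3 ≥ 2 * (s 0 + s 1)) := by
  have hlam : Antitone lam :=
    Fin.antitone_iff_succ_le.mpr (by simpa [Fin.forall_fin_succ] using ⟨h1, h2, h3⟩)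
  constructor
  · intro h
    have hHorn : (lam, starVec lam, (2 : ℝ) • hatPQ 2 2 s) ∈ Horn 4 :=
      mem_Horn_of_mem_coneA le_rfl h
    have h03 : 2 * s 0 ≤ lam 0 + -lam 3 :=
      weyl_inequality_of_mem_Horn hHorn (i := 0) (j := 0) (r := 0) (by decide)
    have h13 : 2 * s 1 ≤ lam 1 + -lam 3 :=
      weyl_inequality_of_mem_Horn hHorn (i := 1) (j := 0) (r := 1) (by decide)
    have h02 : 2 * s 1 ≤ lam 0 + -lam 2 :=
      weyl_inequality_of_mem_Horn hHorn (i := 0) (j := 1) (r := 1) (by decide)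
    have hsum : 2 * s 0 + 2 * s 1 ≤ lam 0 + lam 1 + (-lam 2 + -lam 3) := by
      simpa [show Finset.Iic (1 : Fin 4) = {0, 1} from rfl, starVec, hatPQ] using
        kyFan_inequality_of_mem_Horn hHorn 1
    refine ⟨?_, ?_, ?_, ?_⟩ <;> linarith
  · rintro ⟨h03, h13, h02, hsum⟩
    exact mem_coneA_two hlam (antitone_fin_two hs1) hs2 h03 h13 h02 hsum
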